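/- Let g ∈ C²(ℝ) with g, g', g'' ∈ L²(ℝ, dx), and let Δx > 0. Then ∑_{l∈ℤ} g(l·Δx)² · Δx ≤ ‖g‖²_{L²(ℝ)} + (Δx²/6)·(‖g'‖²_{L²(ℝ)} + ‖g‖_{L²(ℝ)}·‖g''‖_{L²(ℝ)}). -/

import Mathlib

open MeasureTheory Real

/-! Two integrations by parts show that on a cell of length `h` the error of the trapezoidal rule is
`∫ k F''` with a kernel `0 ≤ k ≤ h² / 8`. Summed over the whole grid `∫ F''` vanishes, so `k` may be
replaced by `k - h² / 16`, which is at most `h² / 16` in absolute value. The estimate then follows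
for `F = ‖g‖²` by the Cauchy-Schwarz inequality. -/

open scoped RealInnerProductSpace

section Trapezoid

open intervalIntegral

variable {E : Type*} [NormedAddCommGroup E] [NormedSpace ℝ E] [CompleteSpace E]
  {F F' F'' : ℝ → E} {a b : ℝ}

lemma smul_left_eq_integral_sub_smul_deriv (hF : ∀ x ∈ Set.uIcc a b, HasDerivAt F (F' x) x)
    (hF' : IntervalIntegrable F' volume a b) :
    (b - a) • F a = ∫ x in a..b, (F x - (b - x) • F' x) := by
  have hderiv : ∀ x ∈ Set.uIcc a b,
      HasDerivAt (fun x => (x - b) • F x) (F x - (b - x) • F' x) x := fun x hx =>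
    (((hasDerivAt_id x).sub_const b).smul (hF x hx)).congr_deriv (by simp only [id]; module)
  have hFc : ContinuousOn F (Set.uIcc a b) := HasDerivAt.continuousOn hF
  rw [integral_eq_sub_of_hasDerivAt hderiv
    (hFc.intervalIntegrable.sub (hF'.continuousOn_smul (by fun_prop)))]
  module

lemma norm_smul_left_le_integral (hab : a ≤ b) (hF : ∀ x ∈ Set.uIcc a b, HasDerivAt F (F' x) x)
    (hF' : IntervalIntegrable F' volume a b) :
    ‖(b - a) • F a‖ ≤ ∫ x in a..b, (‖F x‖ + (b - a) * ‖F' x‖) := by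
  have hFc : ContinuousOn F (Set.uIcc a b) := HasDerivAt.continuousOn hF
  rw [smul_left_eq_integral_sub_smul_deriv hF hF']
  refine norm_integral_le_of_norm_le hab (ae_of_all _ fun x hx => ?_)
    (hFc.norm.intervalIntegrable.add (hF'.norm.const_mul _))
  calc ‖F x - (b - x) • F' x‖ ≤ ‖F x‖ + ‖(b - x) • F' x‖ := norm_sub_le _ _
    _ = ‖F x‖ + (b - x) * ‖F' x‖ := by rw [norm_smul, norm_of_nonneg (sub_nonneg.2 hx.2)]
    _ ≤ ‖F x‖ + (b - a) * ‖F' x‖ := by gcongr; exact hx.1.le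

lemma trapezoid_eq_integral_add_smul (hF : ∀ x ∈ Set.uIcc a b, HasDerivAt F (F' x) x)
    (hF' : ∀ x ∈ Set.uIcc a b, HasDerivAt F' (F'' x) x)
    (hF'' : IntervalIntegrable F'' volume a b) :
    ((b - a) / 2) • (F a + F b) = ∫ x in a..b, (F x + ((x - a) * (b - x) / 2) • F'' x) := by
  have hderiv : ∀ x ∈ Set.uIcc a b,
      HasDerivAt (fun x => ((x - a) * (b - x) / 2) • F' x - ((a + b) / 2 - x) • F x)
        (F x + ((x - a) * (b - x) / 2) • F'' x) x := by
    intro x hx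
    have hk : HasDerivAt (fun x : ℝ => (x - a) * (b - x) / 2) ((a + b) / 2 - x) x :=
      (((hasDerivAt_id x).sub_const a).mul ((hasDerivAt_id x).const_sub b)).div_const 2
        |>.congr_deriv (by simp only [id]; ring)
    have hk' : HasDerivAt (fun x : ℝ => (a + b) / 2 - x) (-1) x :=
      (hasDerivAt_id x).const_sub _
    exact ((hk.smul (hF' x hx)).sub (hk'.smul (hF x hx))).congr_deriv (by module)
  have hFc : ContinuousOn F (Set.uIcc a b) := HasDerivAt.continuousOn hF
  rw [integral_eq_sub_of_hasDerivAt hderiv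
    (hFc.intervalIntegrable.add (hF''.continuousOn_smul (by fun_prop)))]
  module

lemma norm_trapezoid_sub_integral_le (hab : a ≤ b)
    (hF : ∀ x ∈ Set.uIcc a b, HasDerivAt F (F' x) x)
    (hF' : ∀ x ∈ Set.uIcc a b, HasDerivAt F' (F'' x) x)
    (hF'' : IntervalIntegrable F'' volume a b) :
    ‖((b - a) / 2) • (F a + F b) - ∫ x in a..b, (F x + ((b - a) ^ 2 / 16) • F'' x)‖ ≤
      ∫ x in a..b, (b - a) ^ 2 / 16 * ‖F'' x‖ := by
  have hFc : ContinuousOn F (Set.uIcc a b) := HasDerivAt.continuousOn hF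
  rw [trapezoid_eq_integral_add_smul hF hF' hF'', ← integral_sub
    (hFc.intervalIntegrable.add (hF''.continuousOn_smul (by fun_prop)))
    (hFc.intervalIntegrable.add (hF''.continuousOn_smul continuousOn_const))]
  refine norm_integral_le_of_norm_le hab (ae_of_all _ fun x hx => ?_) (hF''.norm.const_mul _)
  have hk : |(x - a) * (b - x) / 2 - (b - a) ^ 2 / 16| ≤ (b - a) ^ 2 / 16 := by
    rw [abs_le]
    constructor
    · nlinarith [mul_nonneg (sub_nonneg.2 hx.1.le) (sub_nonneg.2 hx.2)]
    · nlinarith [sq_nonneg (2 * x - a - b)]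
  rw [add_sub_add_left_eq_sub, ← sub_smul, norm_smul, norm_eq_abs]
  gcongr

end Trapezoid

section Grid

variable {E : Type*} [NormedAddCommGroup E] [NormedSpace ℝ E] {F F' F'' : ℝ → E} {h : ℝ}

lemma hasSum_intervalIntegral_add_zsmul (hF : Integrable F) (hh : 0 < h) (a : ℝ) :
    HasSum (fun n : ℤ => ∫ x in (a + n • h)..(a + (n + 1) • h), F x) (∫ x, F x) := by
  have hle (n : ℤ) : a + n • h ≤ a + (n + 1) • h := by gcongr; lia
  simp_rw [intervalIntegral.integral_of_le (hle _)]
  rw [← setIntegral_univ, ← iUnion_Ioc_add_zsmul hh a]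
  exact hasSum_integral_iUnion (fun _ => measurableSet_Ioc)
    (Set.pairwise_disjoint_Ioc_add_zsmul a h) hF.integrableOn

variable [CompleteSpace E]

lemma summable_smul_comp_add_zsmul (hF : ∀ x, HasDerivAt F (F' x) x) (hFi : Integrable F)
    (hFi' : Integrable F') (hh : 0 < h) (a : ℝ) :
    Summable fun n : ℤ => h • F (a + n • h) := by
  have hcell : Integrable fun x => ‖F x‖ + h * ‖F' x‖ := hFi.norm.add (hFi'.norm.const_mul h)
  refine (hasSum_intervalIntegral_add_zsmul hcell hh a).summable.of_norm_bounded fun n => ?_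
  have hstep : a + (n + 1) • h - (a + n • h) = h := by module
  have hle : a + n • h ≤ a + (n + 1) • h := by linarith
  simpa only [hstep] using
    norm_smul_left_le_integral hle (fun x _ => hF x) hFi'.intervalIntegrable

theorem norm_tsum_smul_sub_integral_le (hF : ∀ x, HasDerivAt F (F' x) x)
    (hF' : ∀ x, HasDerivAt F' (F'' x) x) (hFi : Integrable F) (hFi' : Integrable F')
    (hFi'' : Integrable F'') (hh : 0 < h) (a : ℝ) :
    ‖(∑' n : ℤ, h • F (a + n • h)) - ∫ x, F x‖ ≤ h ^ 2 / 16 * ∫ x, ‖F'' x‖ := by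
  have hleft := (summable_smul_comp_add_zsmul hF hFi hFi' hh a).hasSum
  have hright : HasSum (fun n : ℤ => h • F (a + (n + 1) • h)) (∑' n : ℤ, h • F (a + n • h)) :=
    (Equiv.addRight (1 : ℤ)).hasSum_iff.2 hleft
  have htrapezoid : HasSum (fun n : ℤ => (h / 2) • (F (a + n • h) + F (a + (n + 1) • h)))
      (∑' n : ℤ, h • F (a + n • h)) := by
    convert (hleft.add hright).const_smul (1 / 2 : ℝ) using 1
    · ext n; module
    · module
  have hcorr : Integrable fun x => (h ^ 2 / 16) • F'' x := hFi''.smul _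
  have hintegral : ∫ x, (F x + (h ^ 2 / 16) • F'' x) = ∫ x, F x := by
    rw [integral_add hFi hcorr, integral_smul,
      integral_eq_zero_of_hasDerivAt_of_integrable hF' hFi'' hFi', smul_zero, add_zero]
  have hcells := hasSum_intervalIntegral_add_zsmul (hFi.fun_add hcorr) hh a
  have hbound := hasSum_intervalIntegral_add_zsmul (hFi''.norm.const_mul (h ^ 2 / 16)) hh a
  rw [← integral_const_mul, ← hintegral, ← (htrapezoid.sub hcells).tsum_eq]
  refine tsum_of_norm_bounded hbound fun n => ?_
  have hstep : a + (n + 1) • h - (a + n • h) = h := by module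
  have hle : a + n • h ≤ a + (n + 1) • h := by linarith
  simpa only [hstep] using norm_trapezoid_sub_integral_le hle (fun x _ => hF x)
    (fun x _ => hF' x) hFi''.intervalIntegrable

end Grid

section CauchySchwarz

variable {α : Type*} [MeasurableSpace α] {μ : Measure α}

lemma integral_norm_mul_norm_le_sqrt_mul_sqrt {E F : Type*} [NormedAddCommGroup E]
    [NormedAddCommGroup F] {f : α → E} {g : α → F} (hf : MemLp f 2 μ) (hg : MemLp g 2 μ) :
    ∫ x, ‖f x‖ * ‖g x‖ ∂μ ≤ √(∫ x, ‖f x‖ ^ 2 ∂μ) * √(∫ x, ‖g x‖ ^ 2 ∂μ) := by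
  have hf' : MemLp (fun x => ‖f x‖) (ENNReal.ofReal 2) μ := by simpa using hf.norm
  have hg' : MemLp (fun x => ‖g x‖) (ENNReal.ofReal 2) μ := by simpa using hg.norm
  simpa [sqrt_eq_rpow] using integral_mul_norm_le_Lp_mul_Lq HolderConjugate.two_two hf' hg'

variable {E : Type*} [NormedAddCommGroup E] [InnerProductSpace ℝ E] {f g : α → E}

lemma integrable_inner_of_memLp_two (hf : MemLp f 2 μ) (hg : MemLp g 2 μ) :
    Integrable (fun x => ⟪f x, g x⟫) μ :=
  (hf.norm.integrable_mul hg.norm).mono' (hf.1.inner hg.1)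
    (ae_of_all _ fun _ => norm_inner_le_norm _ _)

lemma integral_abs_inner_le_sqrt_mul_sqrt (hf : MemLp f 2 μ) (hg : MemLp g 2 μ) :
    ∫ x, |⟪f x, g x⟫| ∂μ ≤ √(∫ x, ‖f x‖ ^ 2 ∂μ) * √(∫ x, ‖g x‖ ^ 2 ∂μ) :=
  (integral_mono (integrable_inner_of_memLp_two hf hg).abs (hf.norm.integrable_mul hg.norm)
    fun _ => abs_real_inner_le_norm _ _).trans (integral_norm_mul_norm_le_sqrt_mul_sqrt hf hg)

lemma integral_abs_inner_add_norm_sq_le {F : Type*} [NormedAddCommGroup F] {k : α → F}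
    (hf : MemLp f 2 μ) (hg : MemLp g 2 μ) (hk : MemLp k 2 μ) :
    ∫ x, |⟪f x, g x⟫ + ‖k x‖ ^ 2| ∂μ ≤
      (∫ x, ‖k x‖ ^ 2 ∂μ) + √(∫ x, ‖f x‖ ^ 2 ∂μ) * √(∫ x, ‖g x‖ ^ 2 ∂μ) := by
  have hinner := integrable_inner_of_memLp_two hf hg
  have hsq := (memLp_two_iff_integrable_sq_norm hk.1).1 hk
  calc ∫ x, |⟪f x, g x⟫ + ‖k x‖ ^ 2| ∂μ
      ≤ ∫ x, (‖k x‖ ^ 2 + |⟪f x, g x⟫|) ∂μ :=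
        integral_mono (hinner.add hsq).abs (hsq.add hinner.abs) fun x =>
          (abs_add_le _ _).trans_eq (by rw [abs_sq, add_comm])
    _ = (∫ x, ‖k x‖ ^ 2 ∂μ) + ∫ x, |⟪f x, g x⟫| ∂μ := integral_add hsq hinner.abs
    _ ≤ _ := by gcongr; exact integral_abs_inner_le_sqrt_mul_sqrt hf hg

end CauchySchwarz

theorem discrete_l2_norm_le_general {E : Type*} [NormedAddCommGroup E] [InnerProductSpace ℝ E]
    {g g' g'' : ℝ → E} (hg : ∀ x, HasDerivAt g (g' x) x) (hg' : ∀ x, HasDerivAt g' (g'' x) x)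
    (h0 : MemLp g 2) (h1 : MemLp g' 2) (h2 : MemLp g'' 2) {h : ℝ} (hh : 0 < h) (a : ℝ) :
    |(∑' n : ℤ, h * ‖g (a + n • h)‖ ^ 2) - ∫ x, ‖g x‖ ^ 2| ≤
      h ^ 2 / 8 * ((∫ x, ‖g' x‖ ^ 2) + √(∫ x, ‖g x‖ ^ 2) * √(∫ x, ‖g'' x‖ ^ 2)) := by
  have hF (x : ℝ) : HasDerivAt (fun x => ‖g x‖ ^ 2) (2 * ⟪g x, g' x⟫) x := (hg x).norm_sq
  have hF' (x : ℝ) : HasDerivAt (fun x => 2 * ⟪g x, g' x⟫) (2 * (⟪g x, g'' x⟫ + ‖g' x‖ ^ 2)) x := by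
    simpa only [real_inner_self_eq_norm_sq] using ((hg x).inner ℝ (hg' x)).const_mul 2
  have hsq {f : ℝ → E} (hf : MemLp f 2) : Integrable fun x => ‖f x‖ ^ 2 :=
    (memLp_two_iff_integrable_sq_norm hf.1).1 hf
  calc _ ≤ h ^ 2 / 16 * ∫ x, ‖2 * (⟪g x, g'' x⟫ + ‖g' x‖ ^ 2)‖ :=
        norm_tsum_smul_sub_integral_le hF hF' (hsq h0)
          ((integrable_inner_of_memLp_two h0 h1).const_mul 2)
          (((integrable_inner_of_memLp_two h0 h2).add (hsq h1)).const_mul 2) hh a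
    _ = h ^ 2 / 8 * ∫ x, |⟪g x, g'' x⟫ + ‖g' x‖ ^ 2| := by
        simp only [norm_mul, norm_ofNat, norm_eq_abs, integral_const_mul]
        ring
    _ ≤ _ := by gcongr; exact integral_abs_inner_add_norm_sq_le h0 h2 h1

/-- Discrete l² norm estimate: if g ∈ C²(ℝ) with g, g', g'' ∈ L², then for
Δx > 0, ∑_l g(lΔx)²Δx ≤ ‖g‖²_{L²} + (Δx²/6)(‖g'‖²_{L²} + ‖g‖_{L²}‖g''‖_{L²}). -/
theorem discrete_l2_norm_le
    (g : ℝ → ℝ) (hg : ContDiff ℝ 2 g)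
    (h0 : Integrable (fun x => (g x) ^ 2))
    (h1 : Integrable (fun x => (deriv g x) ^ 2))
    (h2 : Integrable (fun x => (deriv (deriv g) x) ^ 2))
    (Δx : ℝ) (hΔx : 0 < Δx) :
    (∑' l : ℤ, (g (l * Δx)) ^ 2 * Δx) ≤
      (∫ x : ℝ, (g x) ^ 2) +
        Δx ^ 2 / 6 *
          ((∫ x : ℝ, (deriv g x) ^ 2) +
            Real.sqrt (∫ x : ℝ, (g x) ^ 2) *
              Real.sqrt (∫ x : ℝ, (deriv (deriv g) x) ^ 2)) := by
  have hL2 {f : ℝ → ℝ} (hf : Measurable f) (hi : Integrable fun x => f x ^ 2) : MemLp f 2 :=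
    (memLp_two_iff_integrable_sq hf.aestronglyMeasurable).2 hi
  have hsharp := discrete_l2_norm_le_general
    (fun x => (hg.differentiable two_ne_zero x).hasDerivAt)
    (fun x => (hg.differentiable_deriv_two x).hasDerivAt)
    (hL2 hg.continuous.measurable h0) (hL2 (measurable_deriv _) h1) (hL2 (measurable_deriv _) h2)
    hΔx 0
  simp only [norm_eq_abs, sq_abs, zero_add, zsmul_eq_mul, mul_comm Δx] at hsharp
  refine (sub_le_iff_le_add'.1 (le_of_abs_le hsharp)).trans ?_
  gcongr
  norm_num
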